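/- For every real y, E[(T/p)·1{Y ≤ y}] = F₁(y) and E[((1−T)/(1−p))·1{Y ≤ y}] = F₀(y); that is, the inverse-propensity weighted indicator of the observed outcome is an unbiased representation of the distribution function of each potential outcome. -/

import Mathlib

open MeasureTheory ProbabilityTheory

/-- Inverse weighting by the conditional probability of `B` for conditionally independent `A`, `B`. -/
theorem ipw_aux {Ω : Type*} {m mΩ : MeasurableSpace Ω} (hm : m ≤ mΩ)
    (μ : Measure Ω) [IsProbabilityMeasure μ] (A B : Set Ω)
    (hA : MeasurableSet A) (hB : MeasurableSet B)
    (hAB : μ[(A ∩ B).indicator (fun _ => (1 : ℝ)) | m] =ᵐ[μ]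
      fun ω => (μ[A.indicator (fun _ => (1 : ℝ)) | m]) ω * (μ[B.indicator (fun _ => (1 : ℝ)) | m]) ω)
    (q : Ω → ℝ) (hq : q =ᵐ[μ] μ[B.indicator (fun _ => (1 : ℝ)) | m])
    (δ : ℝ) (hδ : 0 < δ) (hqδ : ∀ᵐ ω ∂μ, δ ≤ q ω) :
    ∫ ω, (q ω)⁻¹ * (A ∩ B).indicator (fun _ => (1 : ℝ)) ω ∂μ = (μ A).toReal := by
  set r := μ[B.indicator (fun _ => (1 : ℝ)) | m] with hr
  have hrm : StronglyMeasurable[m] (fun ω => (r ω)⁻¹) :=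
    (stronglyMeasurable_condExp.measurable.inv).stronglyMeasurable
  have hi : Integrable ((A ∩ B).indicator (fun _ => (1 : ℝ))) μ :=
    (integrable_const 1).indicator (hA.inter hB)
  have hrδ : ∀ᵐ ω ∂μ, δ ≤ r ω := by
    filter_upwards [hq, hqδ] with ω h1 h2
    rwa [← h1]
  have hint : Integrable ((fun ω => (r ω)⁻¹) * (A ∩ B).indicator (fun _ => (1 : ℝ))) μ := by
    refine hi.bdd_mul (c := δ⁻¹) (hrm.mono hm).aestronglyMeasurable ?_
    filter_upwards [hrδ] with ω h
    rw [Real.norm_eq_abs, abs_of_nonneg (inv_nonneg.2 (hδ.le.trans h))]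
    exact inv_anti₀ hδ h
  have h1 := condExp_mul_of_stronglyMeasurable_left hrm hint hi
  calc ∫ ω, (q ω)⁻¹ * (A ∩ B).indicator (fun _ => (1 : ℝ)) ω ∂μ
      = ∫ ω, ((fun ω => (r ω)⁻¹) * (A ∩ B).indicator (fun _ => (1 : ℝ))) ω ∂μ := by
        refine integral_congr_ae ?_
        filter_upwards [hq] with ω h
        simp only [Pi.mul_apply, h]
    _ = ∫ ω, (μ[(fun ω => (r ω)⁻¹) * (A ∩ B).indicator (fun _ => (1 : ℝ)) | m]) ω ∂μ :=
        (integral_condExp hm).symm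
    _ = ∫ ω, (μ[A.indicator (fun _ => (1 : ℝ)) | m]) ω ∂μ := by
        refine integral_congr_ae ?_
        filter_upwards [h1, hAB, hrδ] with ω h1 h2 h3
        have : r ω ≠ 0 := (hδ.trans_le h3).ne'
        rw [h1, Pi.mul_apply, h2]
        field_simp
    _ = ∫ ω, A.indicator (fun _ => (1 : ℝ)) ω ∂μ := integral_condExp hm
    _ = (μ A).toReal := by
        rw [integral_indicator hA]; simp [Measure.real]

/-- Under strong ignorability, the inverse-propensity weighted indicator of the
observed outcome is an unbiased representation of the distribution function of each potential
outcome: for every real `y`, `E[(T/p)·1{Y ≤ y}] = F₁(y)` and `E[((1−T)/(1−p))·1{Y ≤ y}] = F₀(y)`. -/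
theorem stmt_0
    {Ω : Type*} [MeasurableSpace Ω] [StandardBorelSpace Ω]
    {𝒳 : Type*} [MeasurableSpace 𝒳] [StandardBorelSpace 𝒳]
    (μ : Measure Ω) [IsProbabilityMeasure μ]
    (X : Ω → 𝒳) (T : Ω → ℝ) (Y1 Y0 : Ω → ℝ)
    (hX : Measurable X) (hT : Measurable T) (hY1 : Measurable Y1) (hY0 : Measurable Y0)
    (hT01 : ∀ ω, T ω = 0 ∨ T ω = 1)
    (Y : Ω → ℝ) (hY : ∀ ω, Y ω = T ω * Y1 ω + (1 - T ω) * Y0 ω)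
    (p : Ω → ℝ)
    (hp : p =ᵐ[μ] μ[T | MeasurableSpace.comap X inferInstance])
    (δ : ℝ) (hδ : δ ∈ Set.Ioo (0 : ℝ) (1/2))
    (hpδ : ∀ᵐ ω ∂μ, δ ≤ p ω ∧ p ω ≤ 1 - δ)
    (hindep : CondIndepFun (MeasurableSpace.comap X inferInstance) hX.comap_le
      (fun ω => (Y1 ω, Y0 ω)) T μ)
    (y : ℝ) :
    (∫ ω, (T ω / p ω) * (if Y ω ≤ y then (1 : ℝ) else 0) ∂μ)
        = (μ {ω | Y1 ω ≤ y}).toReal ∧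
    (∫ ω, ((1 - T ω) / (1 - p ω)) * (if Y ω ≤ y then (1 : ℝ) else 0) ∂μ)
        = (μ {ω | Y0 ω ≤ y}).toReal := by
  rw [condIndepFun_iff_condExp_inter_preimage_eq_mul (hY1.prodMk hY0) hT] at hindep
  have hm := hX.comap_le
  have hTi : Integrable T μ := by
    refine Integrable.of_bound hT.aestronglyMeasurable 1 (Filter.Eventually.of_forall fun ω => ?_)
    rcases hT01 ω with h | h <;> simp [h]
  have e1 : (T ⁻¹' {1}).indicator (fun _ => (1 : ℝ)) = T := by
    funext ω
    rcases hT01 ω with h | h <;> simp [Set.indicator, h]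
  have e0 : (T ⁻¹' {0}).indicator (fun _ => (1 : ℝ)) = (fun _ => (1 : ℝ)) - T := by
    funext ω
    rcases hT01 ω with h | h <;> simp [Set.indicator, h]
  constructor
  · have hA : MeasurableSet {ω | Y1 ω ≤ y} := measurableSet_le hY1 measurable_const
    rw [← ipw_aux hm μ {ω | Y1 ω ≤ y} (T ⁻¹' {1}) hA (hT (measurableSet_singleton 1))
      (hindep (Prod.fst ⁻¹' Set.Iic y) {1} (measurable_fst measurableSet_Iic)
        (measurableSet_singleton 1)) p (by rw [e1]; exact hp) δ hδ.1 (hpδ.mono fun _ h => h.1)]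
    congr 1
    funext ω
    rcases hT01 ω with h | h <;> simp [Set.indicator, h, hY]
  · have hA : MeasurableSet {ω | Y0 ω ≤ y} := measurableSet_le hY0 measurable_const
    have hp0 : (fun ω => 1 - p ω) =ᵐ[μ]
        μ[(fun _ => (1 : ℝ)) - T | MeasurableSpace.comap X inferInstance] := by
      filter_upwards [hp, condExp_sub (integrable_const (1 : ℝ)) hTi
        (MeasurableSpace.comap X inferInstance)] with ω h1 h2
      rw [h2, Pi.sub_apply, condExp_const hm, h1]
    rw [← ipw_aux hm μ {ω | Y0 ω ≤ y} (T ⁻¹' {0}) hA (hT (measurableSet_singleton 0))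
      (hindep (Prod.snd ⁻¹' Set.Iic y) {0} (measurable_snd measurableSet_Iic)
        (measurableSet_singleton 0)) (fun ω => 1 - p ω) (by rw [e0]; exact hp0) δ hδ.1
        (hpδ.mono fun _ h => by linarith [h.2])]
    congr 1
    funext ω
    rcases hT01 ω with h | h <;> simp [Set.indicator, h, hY]
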